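/- Let p be a prime with p ≠ 3 and let C₃ be the cyclic group of order 3. Then ℤ_(p)C₃ is semiperfect if and only if p ≡ 2 (mod 3). In particular, if p ≡ 1 (mod 3) then ℤ_(p)C₃ is not semiperfect, so the Krull–Schmidt theorem fails for projective ℤ_(p)C₃-modules. -/

import Mathlib

/-- The Jacobson radical of a (possibly noncommutative) ring, as a two-sided ideal:
the intersection of all maximal left ideals. -/
def ringJacobson (R : Type*) [Ring R] : TwoSidedIdeal R :=
  TwoSidedIdeal.jacobson ⊥

/-- A ring `R` is *semiperfect* if `R / J(R)` is a semisimple (artinian) ring and every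
idempotent of `R / J(R)` can be lifted to an idempotent of `R`. -/
def IsSemiperfectRing (R : Type*) [Ring R] : Prop :=
  IsSemisimpleRing (ringJacobson R).ringCon.Quotient ∧
  ∀ x : (ringJacobson R).ringCon.Quotient, IsIdempotentElem x →
    ∃ e : R, IsIdempotentElem e ∧ (ringJacobson R).ringCon.mk' e = x

instance int_span_prime_isPrime (p : ℕ) [hp : Fact p.Prime] :
    (Ideal.span {(p : ℤ)}).IsPrime :=
  (Ideal.span_singleton_prime (by exact_mod_cast hp.out.ne_zero)).mpr
    (Int.prime_iff_natAbs_prime.mpr (by simpa using hp.out))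

/-- The localisation `ℤ_(p)` of the integers at the prime `p`. -/
abbrev ZLoc (p : ℕ) [Fact p.Prime] : Type :=
  Localization.AtPrime (Ideal.span {(p : ℤ)})

lemma mem_rj {R : Type*} [CommRing R] (x : R) :
    x ∈ ringJacobson R ↔ ∀ M : Ideal R, M.IsMaximal → x ∈ M := by
  have h : x ∈ ringJacobson R ↔ x ∈ Ideal.jacobson (⊥ : Ideal R) := by
    rw [ringJacobson, TwoSidedIdeal.mem_jacobson_iff, Ideal.mem_jacobson_iff]
    simp [TwoSidedIdeal.mem_bot]
  rw [h, Ideal.jacobson, Ideal.mem_sInf]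
  simp

lemma rj_mk_eq {R : Type*} [CommRing R] (x y : R) :
    (ringJacobson R).ringCon.mk' x = (ringJacobson R).ringCon.mk' y ↔ x - y ∈ ringJacobson R := by
  rw [← TwoSidedIdeal.rel_iff]
  exact RingCon.eq _

lemma rj_ker {R K : Type*} [CommRing R] [Field K] [Finite K] (f : R →+* K) (x : R)
    (hx : x ∈ ringJacobson R) : f x = 0 := by
  rw [mem_rj] at hx
  have hfin : Finite (R ⧸ RingHom.ker f) :=
    Finite.of_injective _ (RingHom.kerLift_injective f)
  have hpr : (RingHom.ker f).IsPrime := RingHom.ker_isPrime f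
  have : (RingHom.ker f).IsMaximal :=
    Ideal.Quotient.maximal_of_isField _ (Finite.isField_of_domain _)
  exact hx _ this

lemma semiperfect_of {R K L : Type*} [CommRing R] [Field K] [Finite K] [Field L] [Finite L]
    (f : R →+* K) (g : R →+* L)
    (hJ : ∀ x, f x = 0 → g x = 0 → x ∈ ringJacobson R)
    (e : R) (he : IsIdempotentElem e) (hfe : f e = 1) (hge : g e = 0) :
    IsSemiperfectRing R := by
  constructor
  · let F : (ringJacobson R).ringCon.Quotient →+* K × L :=
      (ringJacobson R).ringCon.lift (f.prod g) (by
        intro x y hxy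
        rw [TwoSidedIdeal.rel_iff] at hxy
        have h1 := rj_ker f _ hxy
        have h2 := rj_ker g _ hxy
        rw [map_sub, sub_eq_zero] at h1 h2
        change (f.prod g) x = (f.prod g) y
        simp [h1, h2])
    have hF : Function.Injective F := by
      rw [injective_iff_map_eq_zero]
      intro q hq
      obtain ⟨x, rfl⟩ := RingCon.mk'_surjective _ q
      have hx : (f x, g x) = (0 : K × L) := hq
      rw [Prod.ext_iff] at hx
      have := hJ x hx.1 hx.2
      rw [← map_zero (ringJacobson R).ringCon.mk', rj_mk_eq, sub_zero]
      exact this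
    have : Finite (ringJacobson R).ringCon.Quotient := Finite.of_injective _ hF
    have : IsReduced (ringJacobson R).ringCon.Quotient := isReduced_of_injective F hF
    exact IsArtinianRing.isSemisimpleRing_of_isReduced _
  · intro q hq
    obtain ⟨x, rfl⟩ := RingCon.mk'_surjective _ q
    have hx : x * x - x ∈ ringJacobson R := by
      rw [← rj_mk_eq, map_mul]; exact hq
    have h1 := rj_ker f _ hx
    have h2 := rj_ker g _ hx
    have h1' : f x = 0 ∨ f x = 1 := by
      rw [map_sub, map_mul] at h1
      have : f x * (f x - 1) = 0 := by linear_combination h1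
      rcases mul_eq_zero.1 this with h | h
      · exact Or.inl h
      · exact Or.inr (sub_eq_zero.1 h)
    have h2' : g x = 0 ∨ g x = 1 := by
      rw [map_sub, map_mul] at h2
      have : g x * (g x - 1) = 0 := by linear_combination h2
      rcases mul_eq_zero.1 this with h | h
      · exact Or.inl h
      · exact Or.inr (sub_eq_zero.1 h)
    have key : ∀ y : R, f y = f x → g y = g x →
        (ringJacobson R).ringCon.mk' y = (ringJacobson R).ringCon.mk' x := by
      intro y ha hb
      rw [rj_mk_eq]
      exact hJ _ (by simp [ha]) (by simp [hb])
    rcases h1' with h1 | h1 <;> rcases h2' with h2 | h2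
    · exact ⟨0, IsIdempotentElem.zero, key _ (by simp [h1]) (by simp [h2])⟩
    · exact ⟨1 - e, he.one_sub, key _ (by simp [h1, hfe]) (by simp [h2, hge])⟩
    · exact ⟨e, he, key _ (by simp [h1, hfe]) (by simp [h2, hge])⟩
    · exact ⟨1, IsIdempotentElem.one, key _ (by simp [h1]) (by simp [h2])⟩

def c3Hom {K : Type*} [CommRing K] (w : K) (hw : w ^ 3 = 1) : Multiplicative (ZMod 3) →* K where
  toFun x := w ^ (x.toAdd.val)
  map_one' := by simp
  map_mul' x y := by
    rw [toAdd_mul, ZMod.val_add, ← pow_add, ← pow_eq_pow_mod _ hw]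

/-- evaluation at a cube root of unity -/
noncomputable def psi {A K : Type*} [CommRing A] [CommRing K] (f : A →+* K) (w : K)
    (hw : w ^ 3 = 1) : MonoidAlgebra A (Multiplicative (ZMod 3)) →+* K :=
  MonoidAlgebra.liftNCRingHom f (c3Hom w hw) (fun _ _ => Commute.all _ _)

/-- `a + b g + c g^2` -/
noncomputable def el {A : Type*} [CommRing A] (a b c : A) :
    MonoidAlgebra A (Multiplicative (ZMod 3)) :=
  MonoidAlgebra.single (Multiplicative.ofAdd 0) a +
  MonoidAlgebra.single (Multiplicative.ofAdd 1) b +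
  MonoidAlgebra.single (Multiplicative.ofAdd 2) c

lemma psi_el {A K : Type*} [CommRing A] [CommRing K] (f : A →+* K) (w : K)
    (hw : w ^ 3 = 1) (a b c : A) :
    psi f w hw (el a b c) = f a + f b * w + f c * w ^ 2 := by
  have h1 : (1 : ZMod 3).val = 1 := rfl
  have h2 : (2 : ZMod 3).val = 2 := rfl
  simp only [psi, el, map_add, MonoidAlgebra.liftNCRingHom_single, c3Hom, MonoidHom.coe_mk,
    OneHom.coe_mk, toAdd_ofAdd, h1, h2, ZMod.val_zero]
  simp

lemma exists_el {A : Type*} [CommRing A] (r : MonoidAlgebra A (Multiplicative (ZMod 3))) :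
    ∃ a b c : A, r = el a b c := by
  induction r using MonoidAlgebra.induction_linear with
  | zero => exact ⟨0, 0, 0, by simp [el]⟩
  | add x y hx hy =>
    obtain ⟨a, b, c, rfl⟩ := hx
    obtain ⟨a', b', c', rfl⟩ := hy
    refine ⟨a + a', b + b', c + c', ?_⟩
    simp only [el, MonoidAlgebra.single_add]
    abel
  | single m r =>
    have : m = Multiplicative.ofAdd 0 ∨ m = Multiplicative.ofAdd 1 ∨ m = Multiplicative.ofAdd 2 := by
      revert m; decide
    rcases this with rfl | rfl | rfl
    · exact ⟨r, 0, 0, by simp [el]⟩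
    · exact ⟨0, r, 0, by simp [el]⟩
    · exact ⟨0, 0, r, by simp [el]⟩

lemma el_mul {A : Type*} [CommRing A] (a b c a' b' c' : A) :
    el a b c * el a' b' c' =
      el (a * a' + b * c' + c * b') (a * b' + b * a' + c * c') (a * c' + b * b' + c * a') := by
  have h1 : (1 : ZMod 3) + 1 = 2 := by decide
  have h2 : (1 : ZMod 3) + 2 = 0 := by decide
  have h3 : (2 : ZMod 3) + 1 = 0 := by decide
  have h4 : (2 : ZMod 3) + 2 = 1 := by decide
  simp only [el, mul_add, add_mul, MonoidAlgebra.single_mul_single, ← ofAdd_add, h1, h2, h3, h4,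
    add_zero, zero_add, MonoidAlgebra.single_add]
  abel

lemma el_sub {A : Type*} [CommRing A] (a b c a' b' c' : A) :
    el a b c - el a' b' c' = el (a - a') (b - b') (c - c') := by
  simp only [el, MonoidAlgebra.single_sub]
  abel

section
variable (p : ℕ) [hp : Fact p.Prime]

noncomputable def phi : ZLoc p →+* ZMod p :=
  IsLocalization.lift (M := (Ideal.span {(p : ℤ)}).primeCompl) (g := Int.castRingHom (ZMod p)) (by
    intro y
    rw [isUnit_iff_ne_zero]
    intro h
    apply y.2
    have h' : ((y : ℤ) : ZMod p) = 0 := h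
    rw [ZMod.intCast_zmod_eq_zero_iff_dvd] at h'
    exact Ideal.mem_span_singleton.2 h')

lemma zloc_max : IsLocalRing.maximalIdeal (ZLoc p) = Ideal.span {(p : ZLoc p)} := by
  rw [← IsLocalization.AtPrime.map_eq_maximalIdeal (Ideal.span {(p : ℤ)}) (ZLoc p),
    Ideal.map_span]
  simp

lemma phi_three : phi p 3 = 3 := map_ofNat (phi p) 3

lemma phi_ker (a : ZLoc p) (h : phi p a = 0) : (p : ZLoc p) ∣ a := by
  rw [← Ideal.mem_span_singleton, ← zloc_max]
  exact IsLocalRing.le_maximalIdeal (RingHom.ker_ne_top (phi p)) h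

lemma el_mem (a b c : ZLoc p) (ha : (p : ZLoc p) ∣ a) (hb : (p : ZLoc p) ∣ b)
    (hc : (p : ZLoc p) ∣ c) :
    el a b c ∈ ringJacobson (MonoidAlgebra (ZLoc p) (Multiplicative (ZMod 3))) := by
  rw [mem_rj]
  intro M hM
  have hint : Algebra.IsIntegral (ZLoc p) (MonoidAlgebra (ZLoc p) (Multiplicative (ZMod 3))) := by
    have : Module.Finite (ZLoc p) (MonoidAlgebra (ZLoc p) (Multiplicative (ZMod 3))) := inferInstance
    infer_instance
  have h1 := Ideal.isMaximal_comap_of_isIntegral_of_isMaximal (R := ZLoc p) M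
  have h2 := IsLocalRing.eq_maximalIdeal h1
  have h3 : (p : ZLoc p) ∈ M.comap (algebraMap (ZLoc p) _) := by
    rw [h2, zloc_max]; exact Ideal.mem_span_singleton_self _
  have key : ∀ (g) (a : ZLoc p), (p : ZLoc p) ∣ a →
      (MonoidAlgebra.single g a : MonoidAlgebra (ZLoc p) (Multiplicative (ZMod 3))) ∈ M := by
    rintro g _ ⟨d, rfl⟩
    have : (MonoidAlgebra.single g (p * d) : MonoidAlgebra (ZLoc p) (Multiplicative (ZMod 3)))
      = MonoidAlgebra.single g d * algebraMap _ _ (p : ZLoc p) := by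
      rw [MonoidAlgebra.coe_algebraMap]
      simp [MonoidAlgebra.single_mul_single, mul_comm]
    rw [this]
    exact M.mul_mem_left _ h3
  exact M.add_mem (M.add_mem (key _ _ ha) (key _ _ hb)) (key _ _ hc)

noncomputable def toQ : ZLoc p →+* ℚ :=
  IsLocalization.lift (M := (Ideal.span {(p : ℤ)}).primeCompl) (g := Int.castRingHom ℚ) (by
    intro y
    rw [isUnit_iff_ne_zero]
    intro h
    apply y.2
    have h' : ((y : ℤ) : ℚ) = 0 := h
    have h2 : (y : ℤ) = 0 := by exact_mod_cast h'
    rw [h2]; exact zero_mem _)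

lemma toQ_inj : Function.Injective (toQ p) := by
  unfold toQ
  rw [IsLocalization.lift_injective_iff]
  intro x y
  have hinj : Function.Injective (algebraMap ℤ (ZLoc p)) :=
    IsLocalization.injective _ (Ideal.primeCompl_le_nonZeroDivisors (Ideal.span {(p : ℤ)}))
  rw [hinj.eq_iff]
  simp

lemma exists_three (hp3 : p ≠ 3) : ∃ t : ZLoc p, 3 * t = 1 := by
  have h : IsUnit (3 : ZLoc p) := by
    by_contra h
    have h1 : (3 : ZLoc p) ∈ IsLocalRing.maximalIdeal (ZLoc p) := h
    rw [zloc_max, Ideal.mem_span_singleton] at h1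
    have h2 := map_dvd (phi p) h1
    rw [map_natCast, ZMod.natCast_self, zero_dvd_iff] at h2
    have h3 : ((3 : ℕ) : ZMod p) = 0 := by rw [phi_three] at h2; simpa using h2
    rw [ZMod.natCast_eq_zero_iff] at h3
    exact hp3 ((Nat.prime_dvd_prime_iff_eq hp.out Nat.prime_three).1 h3)
  exact ⟨_, h.mul_val_inv⟩

lemma exists_root (K : Type*) [Field K] [Fintype K] (h : 3 ∣ Fintype.card K - 1) :
    ∃ w : K, w ^ 3 = 1 ∧ w ≠ 1 := by
  classical
  have : Fact (Nat.Prime 3) := ⟨Nat.prime_three⟩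
  rw [← Fintype.card_units] at h
  obtain ⟨u, hu⟩ := exists_prime_orderOf_dvd_card 3 h
  refine ⟨u, ?_, ?_⟩
  · rw [← Units.val_pow_eq_pow_val, ← hu, pow_orderOf_eq_one]; rfl
  · intro h
    have : u = 1 := Units.ext h
    rw [this, orderOf_one] at hu
    omega

lemma poly_root {K : Type*} [Field K] {w : K} (h : w ^ 3 = 1) (h1 : w ≠ 1) :
    w ^ 2 + w + 1 = 0 := by
  have : (w - 1) * (w ^ 2 + w + 1) = 0 := by linear_combination h
  exact (mul_eq_zero.1 this).resolve_left (sub_ne_zero.2 h1)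

lemma case_one (hp3 : p ≠ 3) (h1 : p % 3 = 1) :
    ¬ IsSemiperfectRing (MonoidAlgebra (ZLoc p) (Multiplicative (ZMod 3))) := by
  rintro ⟨-, hl⟩
  obtain ⟨w, hw, hw1⟩ := exists_root (ZMod p) (by rw [ZMod.card]; omega)
  obtain ⟨t, ht⟩ := exists_three p hp3
  have hwp := poly_root hw hw1
  obtain ⟨n, rfl⟩ := ZMod.intCast_surjective w
  have hn : (p : ZLoc p) ∣ (n : ZLoc p) ^ 3 - 1 := by
    apply phi_ker
    rw [map_sub, map_pow, map_intCast, map_one, hw, sub_self]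
  have ht3 : 3 * phi p t = 1 := by
    have := congrArg (phi p) ht
    rwa [map_mul, phi_three, map_one] at this
  obtain ⟨e, he, hef⟩ := hl ((ringJacobson _).ringCon.mk' (el t (t * n ^ 2) (t * n))) (by
    unfold IsIdempotentElem
    rw [← map_mul, rj_mk_eq, el_mul, el_sub]
    obtain ⟨k, hk⟩ := hn
    apply el_mem
    · exact ⟨2 * t ^ 2 * k, by linear_combination 2 * t ^ 2 * hk + t * ht⟩
    · exact ⟨0, by linear_combination (t * n ^ 2) * ht⟩
    · exact ⟨t ^ 2 * n * k, by linear_combination t ^ 2 * n * hk + t * n * ht⟩)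
  rw [rj_mk_eq] at hef
  have e1 := rj_ker (psi (phi p) _ hw) _ hef
  have hw2 : ((n : ZMod p) ^ 2) ^ 3 = 1 := by rw [← pow_mul, mul_comm, pow_mul, hw, one_pow]
  have e2 := rj_ker (psi (phi p) _ hw2) _ hef
  obtain ⟨a, b, c, rfl⟩ := exists_el e
  rw [map_sub, psi_el, psi_el] at e1 e2
  have hbc : b = c := by
    let om : ℂ := ⟨-1/2, √3/2⟩
    have hom2 : om ^ 2 = ⟨-1/2, -√3/2⟩ := by
      apply Complex.ext
      · simp [om, pow_two]; ring_nf; norm_num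
      · simp [om, pow_two]; ring
    have hom : om ^ 3 = 1 := by
      rw [pow_succ, hom2]
      apply Complex.ext
      · simp [om]; ring_nf; norm_num
      · simp [om]; ring
    have hi := congrArg (psi ((algebraMap ℚ ℂ).comp (toQ p)) om hom) he
    rw [map_mul] at hi
    have him : (psi ((algebraMap ℚ ℂ).comp (toQ p)) om hom (el a b c)).im = 0 := by
      rcases IsIdempotentElem.iff_eq_zero_or_one.1 hi with h | h <;> rw [h] <;> simp
    rw [psi_el, hom2] at him
    simp [om] at him
    have h3 : (√3 : ℝ) ≠ 0 := by positivity
    have h4 : ((toQ p b : ℝ) - toQ p c) * √3 = 0 := by linear_combination 2 * him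
    have h5 := (mul_eq_zero.1 h4).resolve_right h3
    apply toQ_inj p
    exact_mod_cast sub_eq_zero.1 h5
  subst hbc
  simp only [map_mul, map_pow, map_intCast] at e1 e2
  set W : ZMod p := (n : ZMod p)
  set T := phi p t
  -- value one versus value zero
  have a1 : phi p a + phi p b * W + phi p b * W ^ 2 = 1 := by
    linear_combination e1 + ht3 + 2 * T * hw
  have a2 : phi p a + phi p b * W + phi p b * W ^ 2 = 0 := by
    linear_combination e2 - phi p b * W * hw + T * hwp + T * (W + W ^ 2) * hw
  exact one_ne_zero (a1.symm.trans a2)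

lemma case_two (hp3 : p ≠ 3) (h2 : p % 3 = 2) :
    IsSemiperfectRing (MonoidAlgebra (ZLoc p) (Multiplicative (ZMod 3))) := by
  obtain ⟨t, ht⟩ := exists_three p hp3
  have ht3 : 3 * phi p t = 1 := by
    have := congrArg (phi p) ht
    rwa [map_mul, phi_three, map_one] at this
  have : Fintype (GaloisField p 2) := Fintype.ofFinite _
  obtain ⟨w, hw, hw1⟩ := exists_root (GaloisField p 2) (by
    rw [← Nat.card_eq_fintype_card, GaloisField.card p 2 (by norm_num)]
    have : p ^ 2 % 3 = 1 := by rw [Nat.pow_mod, h2]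
    omega)
  have hwp := poly_root hw hw1
  let i := algebraMap (ZMod p) (GaloisField p 2)
  have hnr : ∀ s : ZMod p, s ^ 2 + s + 1 ≠ 0 := by
    intro s hs
    have hs3 : s ^ 3 = 1 := by linear_combination (s - 1) * hs
    have hs0 : s ≠ 0 := by rintro rfl; simp at hs
    have hsp := ZMod.pow_card_sub_one_eq_one hs0
    have : s = 1 := by
      have hm : p = 3 * (p / 3) + 2 := by omega
      have hm' : p - 1 = 3 * (p / 3) + 1 := by omega
      rw [hm', pow_succ, pow_mul, hs3, one_pow, one_mul] at hsp
      exact hsp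
    subst this
    have : (3 : ZMod p) = 0 := by linear_combination hs
    rw [this, zero_mul] at ht3
    exact zero_ne_one ht3
  have hind : ∀ u v : ZMod p, i u + i v * w = 0 → u = 0 ∧ v = 0 := by
    intro u v h
    by_cases hv : v = 0
    · subst hv
      simp only [map_zero, zero_mul, add_zero] at h
      exact ⟨(map_eq_zero i).1 h, rfl⟩
    · exfalso
      apply hnr (-u / v)
      apply i.injective
      have hv' : i v ≠ 0 := (map_ne_zero i).2 hv
      have : i (-u / v) = w := by
        rw [map_div₀, map_neg, div_eq_iff hv']
        linear_combination -h
      rw [map_add, map_add, map_pow, this, map_one, map_zero, hwp]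
  refine semiperfect_of (psi (phi p) 1 (one_pow 3)) (psi (i.comp (phi p)) w hw) ?_
    (el t t t) ?_ ?_ ?_
  · intro x hx hy
    obtain ⟨a, b, c, rfl⟩ := exists_el x
    rw [psi_el] at hx hy
    simp only [RingHom.comp_apply] at hy
    obtain ⟨h1, h2⟩ := hind (phi p a - phi p c) (phi p b - phi p c) (by
      rw [map_sub, map_sub]
      linear_combination hy - i (phi p c) * hwp)
    have hc : phi p c = 0 := by
      linear_combination phi p t * (hx - h1 - h2) - phi p c * ht3
    refine el_mem p a b c (phi_ker p _ ?_) (phi_ker p _ ?_) (phi_ker p _ hc)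
    · linear_combination h1 + hc
    · linear_combination h2 + hc
  · unfold IsIdempotentElem
    rw [el_mul]
    have : t * t + t * t + t * t = t := by linear_combination t * ht
    rw [this]
  · rw [psi_el]; linear_combination ht3
  · rw [psi_el]; linear_combination (i (phi p t)) * hwp

end

/-- Let `p ≠ 3` be a prime and `C₃` the cyclic group of order `3`. Then `ℤ_(p)C₃` is
semiperfect if and only if `p ≡ 2 (mod 3)`; in particular if `p ≡ 1 (mod 3)` then
`ℤ_(p)C₃` is not semiperfect. -/
theorem isSemiperfectRing_zloc_C3_iff (p : ℕ) [Fact p.Prime] (hp3 : p ≠ 3) :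
    (IsSemiperfectRing (MonoidAlgebra (ZLoc p) (Multiplicative (ZMod 3))) ↔ p % 3 = 2) ∧
    (p % 3 = 1 →
      ¬ IsSemiperfectRing (MonoidAlgebra (ZLoc p) (Multiplicative (ZMod 3)))) := by
  refine ⟨⟨fun h => ?_, case_two p hp3⟩, case_one p hp3⟩
  by_contra h2
  have h0 : p % 3 ≠ 0 := by
    intro h0
    have hd : 3 ∣ p := Nat.dvd_of_mod_eq_zero h0
    exact hp3 ((Nat.prime_dvd_prime_iff_eq Nat.prime_three (Fact.out : p.Prime)).1 hd).symm
  exact case_one p hp3 (by omega) h
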